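/- Let E and F be real inner product spaces, Q ⊆ E a convex set, u : E → ℝ convex on Q, W : E → F a continuous linear map, and ε > 0, R > 0. Suppose x* ∈ Q satisfies W x* = 0 and there exists y* ∈ F with ‖y*‖ ≤ R such that u(x*) ≤ u(x) + ⟨y*, W x⟩ for all x ∈ Q (Lagrangian saddle-point/dual-boundedness condition). Define U(x) = u(x) + (R²/ε)·‖W x‖². If x̃ ∈ Q satisfies U(x̃) ≤ U(x*) + ε (in particular, if U(x̃) − inf_{x∈Q} U(x) ≤ ε), then u(x̃) − u(x*) ≤ ε and ‖W x̃‖ ≤ 2ε/R. Moreover u(x*) = min of u over {x ∈ Q : W x = 0}, so u(x̃) − min_{x∈Q, Wx=0} u(x) ≤ ε. -/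

import Mathlib

open RealInnerProductSpace

theorem penalty_lemma_statement_one
    {E F : Type*} [NormedAddCommGroup E] [InnerProductSpace ℝ E]
    [NormedAddCommGroup F] [InnerProductSpace ℝ F]
    (Q : Set E) (hQ : Convex ℝ Q)
    (u : E → ℝ) (hu : ConvexOn ℝ Q u)
    (W : E →L[ℝ] F)
    (ε R : ℝ) (hε : 0 < ε) (hR : 0 < R)
    (xs : E) (hxs : xs ∈ Q) (hWxs : W xs = 0)
    (ys : F) (hys : ‖ys‖ ≤ R)
    (hsaddle : ∀ x ∈ Q, u xs ≤ u x + ⟪ys, W x⟫)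
    (U : E → ℝ) (hU : ∀ x, U x = u x + R ^ 2 / ε * ‖W x‖ ^ 2)
    (xt : E) (hxt : xt ∈ Q) (happrox : U xt ≤ U xs + ε) :
    u xt - u xs ≤ ε ∧ ‖W xt‖ ≤ 2 * ε / R ∧ ∀ x ∈ Q, W x = 0 → u xs ≤ u x := by
  rw [hU, hU, hWxs] at happrox
  simp only [norm_zero] at happrox
  have hpen : 0 ≤ R ^ 2 / ε * ‖W xt‖ ^ 2 := by positivity
  refine ⟨by linarith, ?_, ?_⟩
  · have h1 := hsaddle xt hxt
    have h2 := real_inner_le_norm ys (W xt)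
    have h3 : ‖ys‖ * ‖W xt‖ ≤ R * ‖W xt‖ :=
      mul_le_mul_of_nonneg_right hys (norm_nonneg _)
    have h4 : R ^ 2 / ε * ‖W xt‖ ^ 2 ≤ ε + R * ‖W xt‖ := by linarith
    have h5 : R ^ 2 / ε * ‖W xt‖ ^ 2 = (R * ‖W xt‖) ^ 2 / ε := by ring
    rw [h5, div_le_iff₀ hε] at h4
    rw [le_div_iff₀ hR, mul_comm]
    by_contra! hc
    nlinarith
  · intro x hx hWx
    have h := hsaddle x hx
    rw [hWx, inner_zero_right] at h
    linarith
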